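/- arXiv:2405.11995 — 6 statements merged into one kernel-verified Lean document; each statement's English description precedes it below -/
import Mathlib

section
/- In the follow-policy setting, let B be a braking function and C a speed control function for B. Assume v_e ≤ V_e, B(v_e) ≤ x_i + B(V_i) for every i ∈ {1,…,k}, and B(v_e) ≤ X, and let (Δv, Δd) := C(v_e, VL) for VL := ⟨(0, V_e), (x_1, V_1), …, (x_k, V_k), (X, 0)⟩. Then: (4) v_e + Δv ≤ V_e if 0 ≤ Δd < x_1; (5) v_e + Δv ≤ V_i if x_i ≤ Δd < x_{i+1} for some i ∈ {1,…,k} (with x_{k+1} := X); (6) Δd + B(v_e + Δv) ≤ x_i + B(V_i) for every i ∈ {1,…,k} with Δd ≤ x_i; and (7) Δd + B(v_e + Δv) ≤ X. -/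
/-!
The hypotheses say exactly that `ve` is controllable for the valid constraint list
`⟨(0, Ve), (x_i, V_i)…, (X, 0)⟩`: the entry `(0, Ve)` follows from `ve ≤ Ve` by monotonicity of `B`,
and the entry `(X, 0)` from `B 0 = 0`. The guarantees of the speed control function then give the
conclusions entry by entry. The unconditional bound at `X` holds because a zero limit at `X`
forces `Δd ≤ X`.
-/

/-- A braking function: `B 0 = 0`, `B` nonnegative on nonnegative speeds, and strictly
increasing on nonnegative reals. -/
def IsBraking (B : ℝ → ℝ) : Prop :=
  B 0 = 0 ∧ (∀ v, 0 ≤ v → 0 ≤ B v) ∧ ∀ v₁ v₂, v₂ < v₁ → 0 ≤ v₂ → B v₂ < B v₁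

/-- A speed `v` is controllable with respect to a speed-limit constraint list `VL`
(for the braking function `B`) if `B v ≤ d + B V` for every constraint `(d, V)` in `VL`. -/
def Controllable (B : ℝ → ℝ) (v : ℝ) (VL : List (ℝ × ℝ)) : Prop :=
  ∀ p ∈ VL, B v ≤ p.1 + B p.2

/-- A valid speed-limit constraint list: nonempty, first distance is 0, distances strictly
increasing, all speed limits nonnegative. -/
def ValidVL (VL : List (ℝ × ℝ)) : Prop :=
  VL ≠ [] ∧ (∀ h : 0 < VL.length, (VL.get ⟨0, h⟩).1 = 0) ∧
    List.Chain' (· < ·) (VL.map Prod.fst) ∧ ∀ p ∈ VL, 0 ≤ p.2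

/-- A speed control function for a braking function `B`: for every controllable pair
`(v, VL)` it returns `(Δv, Δd)` with `v + Δv ≥ 0`, `Δd ≥ 0`, such that for all `i`:
(i) `v + Δv ≤ V_i` whenever `d_i ≤ Δd < d_{i+1}` (with `d_{n+1} = +∞`);
(ii) `Δd + B (v + Δv) ≤ d_i + B V_i` whenever `Δd ≤ d_i`;
(iii) `Δd ≤ d_i` whenever `V_i = 0`. -/
def IsSpeedControl (B : ℝ → ℝ) (C : ℝ → List (ℝ × ℝ) → ℝ × ℝ) : Prop :=
  ∀ v VL, 0 ≤ v → ValidVL VL → Controllable B v VL →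
    0 ≤ v + (C v VL).1 ∧ 0 ≤ (C v VL).2 ∧
    (∀ i : Fin VL.length, (VL.get i).1 ≤ (C v VL).2 →
      (∀ h : (i : ℕ) + 1 < VL.length, (C v VL).2 < (VL.get ⟨(i : ℕ) + 1, h⟩).1) →
      v + (C v VL).1 ≤ (VL.get i).2) ∧
    (∀ p ∈ VL, (C v VL).2 ≤ p.1 → (C v VL).2 + B (v + (C v VL).1) ≤ p.1 + B p.2) ∧
    (∀ p ∈ VL, p.2 = 0 → (C v VL).2 ≤ p.1)

/-- In the follow-policy setting, if `B` is a braking function, `C` a speed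
control function for `B`, and the controllability conditions (1)–(3) hold, then the output
`(Δv, Δd) = C ve VL` for `VL = ⟨(0, Ve), (x 0, Vs 0), …, (x (k-1), Vs (k-1)), (X, 0)⟩`
satisfies conclusions (4)–(7), with the convention `x_{k+1} := X`. -/
theorem follow_postconditions
    (B : ℝ → ℝ) (hB : IsBraking B)
    (C : ℝ → List (ℝ × ℝ) → ℝ × ℝ) (hC : IsSpeedControl B C)
    (k : ℕ) (ve Ve X : ℝ) (x Vs : Fin k → ℝ)
    (hve : 0 ≤ ve) (hVe : 0 ≤ Ve)
    (hxpos : ∀ i, 0 < x i) (hxmono : StrictMono x)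
    (hVs : ∀ i, 0 ≤ Vs i)
    (hxX : ∀ i, x i < X) (hXpos : 0 < X)
    (h1 : ve ≤ Ve) (h2 : ∀ i, B ve ≤ x i + B (Vs i)) (h3 : B ve ≤ X) :
    ∀ Δv Δd : ℝ,
      (Δv, Δd) = C ve ((0, Ve) :: (List.ofFn fun i => (x i, Vs i)) ++ [(X, 0)]) →
      -- (4) `ve + Δv ≤ Ve` if `0 ≤ Δd < x_1`
      ((0 ≤ Δd → (∀ h : 0 < k, Δd < x ⟨0, h⟩) → (k = 0 → Δd < X) → ve + Δv ≤ Ve) ∧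
       -- (5) `ve + Δv ≤ Vs i` if `x_i ≤ Δd < x_{i+1}` (with `x_{k+1} := X`)
       (∀ i : Fin k, x i ≤ Δd →
          (∀ h : (i : ℕ) + 1 < k, Δd < x ⟨(i : ℕ) + 1, h⟩) →
          ((i : ℕ) + 1 = k → Δd < X) → ve + Δv ≤ Vs i) ∧
       -- (6) `Δd + B (ve + Δv) ≤ x i + B (Vs i)` whenever `Δd ≤ x i`
       (∀ i : Fin k, Δd ≤ x i → Δd + B (ve + Δv) ≤ x i + B (Vs i)) ∧
       -- (7) `Δd + B (ve + Δv) ≤ X`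
       (Δd + B (ve + Δv) ≤ X)) := by
  intro Δv Δd hEq
  set L : List (ℝ × ℝ) := (0, Ve) :: (List.ofFn fun i => (x i, Vs i)) ++ [(X, 0)] with hL
  obtain ⟨hB0, -, hBlt⟩ := hB
  have hlen : L.length = k + 2 := by simp [hL]
  have hmem : ∀ p, p ∈ L ↔ p = (0, Ve) ∨ (∃ i, (x i, Vs i) = p) ∨ p = (X, 0) := by
    intro p
    simp [hL, List.mem_ofFn]
  have hzero : ∀ h : 0 < L.length, L[0] = (0, Ve) := by
    intro h
    simp [hL]
  have hsign : ∀ (i : ℕ) (hi : i < k) (h : i + 1 < L.length),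
      L[i + 1] = (x ⟨i, hi⟩, Vs ⟨i, hi⟩) := by
    intro i hi h
    simp [hL, hi]
  have hlast : ∀ h : k + 1 < L.length, L[k + 1] = (X, 0) := by
    intro h
    simp [hL]
  have hvalid : ValidVL L := by
    refine ⟨by simp [hL], by simp [hL], ?_, ?_⟩
    · change List.IsChain _ _
      rw [List.isChain_iff_pairwise, List.pairwise_map]
      simp only [hL, List.cons_append, List.pairwise_cons, List.pairwise_append,
        List.pairwise_ofFn, List.mem_append, List.mem_ofFn, List.mem_singleton]
      refine ⟨?_, fun i j hij => hxmono hij, by simp, ?_⟩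
      · rintro p (⟨i, rfl⟩ | rfl)
        exacts [hxpos i, hXpos]
      · rintro p ⟨i, rfl⟩ q rfl
        exact hxX i
    · intro p hp
      rcases (hmem p).1 hp with rfl | ⟨i, rfl⟩ | rfl
      exacts [hVe, hVs i, le_rfl]
  have hctrl : Controllable B ve L := by
    intro p hp
    rcases (hmem p).1 hp with rfl | ⟨i, rfl⟩ | rfl
    · rcases h1.eq_or_lt with rfl | h
      · simp
      · simpa using (hBlt _ _ h hve).le
    · exact h2 i
    · simpa [hB0] using h3
  obtain ⟨-, -, hi, hii, hiii⟩ := hC ve L hve hvalid hctrl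
  rw [← hEq] at hi hii hiii
  simp only [List.get_eq_getElem] at hi
  refine ⟨?_, ?_, ?_, ?_⟩
  · intro h0 hx hX
    have key := hi ⟨0, by omega⟩
    simp only [hzero] at key
    refine key h0 fun h => ?_
    rcases Nat.eq_zero_or_pos k with rfl | hk
    · simpa only [hlast] using hX rfl
    · simpa only [hsign 0 hk] using hx hk
  · intro i hxi hx hX
    have key := hi ⟨i + 1, by omega⟩
    simp only [hsign i i.isLt] at key
    refine key hxi fun h => ?_
    rcases (Nat.succ_le_of_lt i.isLt).lt_or_eq with hk | hk
    · simpa only [hsign (i + 1) hk] using hx hk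
    · have hget : L[(i : ℕ) + 1 + 1] = (X, 0) := by
        have := hlast (by omega)
        simpa only [← hk] using this
      simpa only [hget] using hX hk
  · exact fun i h => hii _ ((hmem _).2 (.inr (.inl ⟨i, rfl⟩))) h
  -- The zero limit at `X` forces `Δd ≤ X`, so the braking bound applies there.
  · have hX := (hmem (X, 0)).2 (.inr (.inr rfl))
    simpa [hB0] using hii _ hX (hiii _ hX rfl)
end

section
/- The function B_ex is well-defined (the recursion terminates for every v ≥ 0) and is a braking function: B_ex(0) = 0, B_ex(v) ≥ 0 for all v ≥ 0, and B_ex(v₁) > B_ex(v₂) whenever v₁ > v₂ ≥ 0. Moreover, B_ex is continuous on [0, ∞). -/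
/-!
Unrolling the recursion `n = ⌊v / c⌋` times, where `c = bmax * Δt`, gives the closed form
`B v = Δt / 2 * ((2 * n + 1) * v - c * n * (n + 1))`. For fixed `n` this is an affine function
of `v`, and the index `⌊v / c⌋` maximises its value at `v` over all integers (`line_le_profile`).
So `B` is the upper envelope of affine functions: it is convex on `ℝ`, hence continuous, and on
`[0, ∞)` it lies above its supporting line at each point, whose slope is positive, hence it is
strictly increasing. Uniqueness is induction on the number of recursion steps.
-/

/-- The `n`-th affine piece of the closed form of `B_ex`, without the factor `Δt / 2`. -/
noncomputable def line (c : ℝ) (n : ℤ) (v : ℝ) : ℝ := (2 * n + 1) * v - c * n * (n + 1)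

/-- The closed form of `B_ex` without the factor `Δt / 2`, extended to all of `ℝ`. -/
noncomputable def profile (c v : ℝ) : ℝ := line c ⌊v / c⌋ v

/-- The upper-envelope property: `profile c` dominates every affine piece. -/
lemma line_le_profile {c : ℝ} (hc : 0 < c) (m : ℤ) (v : ℝ) : line c m v ≤ profile c v := by
  unfold profile line
  have h1 : (⌊v / c⌋ : ℝ) * c ≤ v := (le_div_iff₀ hc).1 (Int.floor_le _)
  have h2 : v < ((⌊v / c⌋ : ℝ) + 1) * c := (div_lt_iff₀ hc).1 (Int.lt_floor_add_one _)
  generalize ⌊v / c⌋ = n at *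
  -- The difference of the two sides is `(n - m) * (2 * v - c * (n + m + 1))`,
  -- and the two factors have the same sign.
  rcases lt_trichotomy m n with h | rfl | h
  · have h' : (m : ℝ) + 1 ≤ n := by exact_mod_cast h
    have : 0 ≤ ((n : ℝ) - m) * (2 * v - c * (n + m + 1)) :=
      mul_nonneg (by linarith) (by nlinarith)
    linarith
  · exact le_rfl
  · have h' : (n : ℝ) + 1 ≤ m := by exact_mod_cast h
    have : 0 ≤ ((m : ℝ) - n) * (c * (n + m + 1) - 2 * v) :=
      mul_nonneg (by linarith) (by nlinarith)
    linarith

lemma profile_convexOn {c : ℝ} (hc : 0 < c) : ConvexOn ℝ Set.univ (profile c) := by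
  refine ⟨convex_univ, fun x _ y _ a b ha hb hab => ?_⟩
  simp only [smul_eq_mul]
  set n := ⌊(a * x + b * y) / c⌋ with hn
  have h1 := mul_le_mul_of_nonneg_left (line_le_profile hc n x) ha
  have h2 := mul_le_mul_of_nonneg_left (line_le_profile hc n y) hb
  have h3 : profile c (a * x + b * y) = a * line c n x + b * line c n y := by
    obtain rfl : b = 1 - a := by linarith
    simp only [profile, ← hn, line]
    ring
  linarith

lemma profile_continuous {c : ℝ} (hc : 0 < c) : Continuous (profile c) :=
  continuousOn_univ.1 ((profile_convexOn hc).continuousOn isOpen_univ)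

lemma profile_eq_of_lt {c v : ℝ} (h0 : 0 ≤ v) (h : v < c) : profile c v = v := by
  have hc : 0 < c := h0.trans_lt h
  have : ⌊v / c⌋ = 0 :=
    Int.floor_eq_zero_iff.2 ⟨div_nonneg h0 hc.le, (div_lt_one hc).2 h⟩
  simp [profile, line, this]

lemma profile_step {c : ℝ} (hc : 0 < c) (v : ℝ) :
    profile c v = 2 * v - c + profile c (v - c) := by
  have : ⌊(v - c) / c⌋ = ⌊v / c⌋ - 1 := by
    rw [sub_div, div_self hc.ne', Int.floor_sub_one]
  simp only [profile, line, this]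
  push_cast
  ring

lemma profile_lt {c : ℝ} (hc : 0 < c) {v w : ℝ} (hvw : v < w) (h0 : 0 ≤ v) :
    profile c v < profile c w := by
  -- Compare at `w` with the piece that is active at `v`, which has slope at least `1`.
  refine lt_of_lt_of_le ?_ (line_le_profile hc ⌊v / c⌋ w)
  have hn : (0 : ℝ) ≤ (⌊v / c⌋ : ℝ) := by
    exact_mod_cast Int.floor_nonneg.2 (div_nonneg h0 hc.le)
  unfold profile line
  nlinarith

/-- The function `B_ex`, defined by the well-founded recursion
`B_ex v = v·Δt/2` if `0 ≤ v < b_max·Δt` and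
`B_ex v = v·Δt − b_max·Δt²/2 + B_ex (v − b_max·Δt)` if `v ≥ b_max·Δt`,
is well-defined on `[0, ∞)` (existence and uniqueness of a function satisfying the
recursion), is a braking function (`B_ex 0 = 0`, `B_ex v ≥ 0` for `v ≥ 0`, strictly
increasing on nonnegative reals), and moreover is continuous on `[0, ∞)`. -/
theorem Bex_wellDefined_isBraking_continuous
    (bmax Δt : ℝ) (hb : 0 < bmax) (ht : 0 < Δt) :
    ∃ B : ℝ → ℝ,
      -- B satisfies the recursion
      ((∀ v, 0 ≤ v → v < bmax * Δt → B v = v * Δt / 2) ∧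
       (∀ v, bmax * Δt ≤ v → B v = v * Δt - bmax * Δt ^ 2 / 2 + B (v - bmax * Δt))) ∧
      -- and it is the unique such function on [0, ∞)
      (∀ B' : ℝ → ℝ,
        (∀ v, 0 ≤ v → v < bmax * Δt → B' v = v * Δt / 2) →
        (∀ v, bmax * Δt ≤ v → B' v = v * Δt - bmax * Δt ^ 2 / 2 + B' (v - bmax * Δt)) →
        ∀ v, 0 ≤ v → B' v = B v) ∧
      -- B is a braking function
      (B 0 = 0) ∧
      (∀ v, 0 ≤ v → 0 ≤ B v) ∧
      (∀ v₁ v₂, v₂ < v₁ → 0 ≤ v₂ → B v₂ < B v₁) ∧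
      -- and B is continuous on [0, ∞)
      ContinuousOn B (Set.Ici (0 : ℝ)) := by
  have hc : 0 < bmax * Δt := mul_pos hb ht
  have hrec0 : ∀ v, 0 ≤ v → v < bmax * Δt →
      Δt / 2 * profile (bmax * Δt) v = v * Δt / 2 := by
    intro v h0 h
    rw [profile_eq_of_lt h0 h]
    ring
  have hrec : ∀ v, Δt / 2 * profile (bmax * Δt) v =
      v * Δt - bmax * Δt ^ 2 / 2 + Δt / 2 * profile (bmax * Δt) (v - bmax * Δt) := by
    intro v
    rw [profile_step hc v]
    ring
  have hzero : Δt / 2 * profile (bmax * Δt) 0 = 0 := by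
    rw [profile_eq_of_lt le_rfl hc, mul_zero]
  have hmono : ∀ v₁ v₂, v₂ < v₁ → 0 ≤ v₂ →
      Δt / 2 * profile (bmax * Δt) v₂ < Δt / 2 * profile (bmax * Δt) v₁ :=
    fun v₁ v₂ h h0 => mul_lt_mul_of_pos_left (profile_lt hc h h0) (half_pos ht)
  refine ⟨fun v => Δt / 2 * profile (bmax * Δt) v, ⟨hrec0, fun v _ => hrec v⟩, ?_, hzero,
    ?_, hmono, (continuous_const.mul (profile_continuous hc)).continuousOn⟩
  · intro B' h0' hstep'
    have key : ∀ n : ℕ, ∀ v, 0 ≤ v → v < n * (bmax * Δt) →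
        B' v = Δt / 2 * profile (bmax * Δt) v := by
      intro n
      induction n with
      | zero =>
        intro v h0 h
        simp only [Nat.cast_zero, zero_mul] at h
        linarith
      | succ n ih =>
        intro v h0 h
        push_cast at h
        rcases lt_or_ge v (bmax * Δt) with hv | hv
        · rw [h0' v h0 hv, hrec0 v h0 hv]
        · rw [hstep' v hv, hrec v, ih (v - bmax * Δt) (by linarith) (by linarith)]
    intro v h0
    obtain ⟨n, hn⟩ := exists_nat_gt (v / (bmax * Δt))
    exact key n v h0 ((div_lt_iff₀ hc).1 hn)
  · intro v h0
    rcases h0.eq_or_lt with rfl | h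
    · exact hzero.ge
    · exact hzero.ge.trans (hmono v 0 h le_rfl).le
end

section
/- For all v ≥ 0, v²/(2·b_max) ≤ B_ex(v) ≤ v²/(2·b_max) + v·Δt/2; moreover, B_ex(n·b_max·Δt) = n²·b_max·Δt²/2 for every natural number n. -/
/-!
Writing `v = w + bmax * Δt`, the increment `v * Δt - bmax * Δt ^ 2 / 2` in the recursion is exactly
`v ^ 2 / (2 * bmax) - w ^ 2 / (2 * bmax)`, so `Bex v - v ^ 2 / (2 * bmax)` is periodic with period
`bmax * Δt`. On the base interval this defect equals `v * (bmax * Δt - v) / (2 * bmax)`, which lies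
between `0` and `v * Δt / 2` and vanishes at `v = 0`. Both claims follow by induction on the number
of periods.
-/

/-- for every `v ≥ 0`, `v²/(2·b_max) ≤ B_ex v ≤ v²/(2·b_max) + v·Δt/2`;
moreover `B_ex (n·b_max·Δt) = n²·b_max·Δt²/2` for every natural number `n`.
Here `B_ex` is any function satisfying the defining recursion. -/
theorem Bex_bounds_and_exact_values
    (bmax Δt : ℝ) (hb : 0 < bmax) (ht : 0 < Δt)
    (Bex : ℝ → ℝ)
    (hBex1 : ∀ v, 0 ≤ v → v < bmax * Δt → Bex v = v * Δt / 2)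
    (hBex2 : ∀ v, bmax * Δt ≤ v → Bex v = v * Δt - bmax * Δt ^ 2 / 2 + Bex (v - bmax * Δt)) :
    (∀ v, 0 ≤ v →
      v ^ 2 / (2 * bmax) ≤ Bex v ∧ Bex v ≤ v ^ 2 / (2 * bmax) + v * Δt / 2) ∧
    ∀ n : ℕ, Bex (n * bmax * Δt) = (n : ℝ) ^ 2 * bmax * Δt ^ 2 / 2 := by
  have key : ∀ v, v ^ 2 / (2 * bmax) =
      (v - bmax * Δt) ^ 2 / (2 * bmax) + (v * Δt - bmax * Δt ^ 2 / 2) := by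
    intro v
    field_simp
    ring
  have hbt : 0 < bmax * Δt := mul_pos hb ht
  constructor
  · have bounds : ∀ n : ℕ, ∀ v, 0 ≤ v → v < (n + 1) * (bmax * Δt) →
        v ^ 2 / (2 * bmax) ≤ Bex v ∧ Bex v ≤ v ^ 2 / (2 * bmax) + v * Δt / 2 := by
      intro n
      induction n with
      | zero =>
        intro v hv hlt
        have hlt' : v < bmax * Δt := by simpa using hlt
        rw [hBex1 v hv hlt']
        constructor
        · rw [div_le_iff₀ (by positivity)]
          nlinarith
        · have : 0 ≤ v ^ 2 / (2 * bmax) := by positivity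
          linarith
      | succ n ih =>
        intro v hv hlt
        rcases lt_or_ge v (bmax * Δt) with h | h
        · exact ih v hv (by nlinarith [(n.cast_nonneg : (0 : ℝ) ≤ n)])
        · push_cast at hlt
          obtain ⟨h1, h2⟩ := ih (v - bmax * Δt) (by linarith) (by linarith)
          rw [hBex2 v h, key v]
          have : (v - bmax * Δt) * Δt ≤ v * Δt := by nlinarith
          constructor <;> linarith
    intro v hv
    obtain ⟨n, hn⟩ := exists_nat_gt (v / (bmax * Δt))
    rw [div_lt_iff₀ hbt] at hn
    exact bounds n v hv (by linarith)
  · intro n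
    induction n with
    | zero => simp [hBex1 0 le_rfl hbt]
    | succ n ih =>
      have hle : bmax * Δt ≤ ((n + 1 : ℕ) : ℝ) * bmax * Δt := by
        push_cast
        nlinarith [mul_nonneg (n.cast_nonneg : (0 : ℝ) ≤ n) hbt.le]
      have hsub : ((n + 1 : ℕ) : ℝ) * bmax * Δt - bmax * Δt = n * bmax * Δt := by
        push_cast
        ring
      rw [hBex2 _ hle, hsub, ih]
      push_cast
      ring
end

section
/- Let V_0 > 0 be a real with Δt ≤ V_0/(2·b_max). Then for every v ≥ V_0, v·Δt ≤ B_ex(v). (That is, the reactivity assumption v·Δt ≤ B(v) for all v above the minimal speed limit V_0 holds for the example braking function B_ex whenever the control period Δt is small enough.) -/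
/-!
The bound on `Δt` says `2 * bmax * Δt ≤ V₀`, so for `v ≥ V₀` the recursion applies at `v` and at
`u = v - bmax * Δt ≥ bmax * Δt`. The first step gives `v * Δt - bmax * Δt ^ 2 / 2`, the second at
least `bmax * Δt ^ 2 / 2`, and what remains is nonnegative by `Bex_nonneg_of_lt`.
-/

/-- Induction on the number `n` of full braking steps: each one adds
`v * Δt - bmax * Δt ^ 2 / 2 ≥ bmax * Δt ^ 2 / 2 > 0`. -/
lemma Bex_nonneg_of_lt
    (bmax Δt : ℝ) (hb : 0 < bmax) (ht : 0 < Δt)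
    (Bex : ℝ → ℝ)
    (hBex1 : ∀ v, 0 ≤ v → v < bmax * Δt → Bex v = v * Δt / 2)
    (hBex2 : ∀ v, bmax * Δt ≤ v → Bex v = v * Δt - bmax * Δt ^ 2 / 2 + Bex (v - bmax * Δt))
    (n : ℕ) : ∀ v, 0 ≤ v → v < (n + 1) * (bmax * Δt) → 0 ≤ Bex v := by
  induction n with
  | zero =>
    intro v h0 hv
    rw [hBex1 v h0 (by simpa using hv)]
    positivity
  | succ k ih =>
    intro v h0 hv
    rcases lt_or_ge v (bmax * Δt) with h | h
    · rw [hBex1 v h0 h]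
      positivity
    · have hrec := ih (v - bmax * Δt) (by linarith) (by push_cast at hv; linarith)
      have hstep := mul_le_mul_of_nonneg_right h ht.le
      have hpos : 0 < bmax * Δt ^ 2 := by positivity
      rw [hBex2 v h]
      nlinarith

/-- if `V₀ > 0` and `Δt ≤ V₀ / (2·b_max)`, then for every `v ≥ V₀` we have
`v·Δt ≤ B_ex v` (the reactivity assumption holds for `B_ex` whenever the control period
`Δt` is small enough).  Here `B_ex` is any function satisfying the defining recursion. -/
theorem Bex_reactivity
    (bmax Δt : ℝ) (hb : 0 < bmax) (ht : 0 < Δt)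
    (Bex : ℝ → ℝ)
    (hBex1 : ∀ v, 0 ≤ v → v < bmax * Δt → Bex v = v * Δt / 2)
    (hBex2 : ∀ v, bmax * Δt ≤ v → Bex v = v * Δt - bmax * Δt ^ 2 / 2 + Bex (v - bmax * Δt))
    (V₀ : ℝ) (hV₀ : 0 < V₀) (hΔt : Δt ≤ V₀ / (2 * bmax)) :
    ∀ v, V₀ ≤ v → v * Δt ≤ Bex v := by
  intro v hv
  have hc : 0 < bmax * Δt := by positivity
  rw [le_div_iff₀ (by positivity)] at hΔt
  -- Since `v ≥ 2 * bmax * Δt`, the recursion unfolds twice; the second step compensates the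
  -- loss `bmax * Δt ^ 2 / 2` of the first, and the remainder is nonnegative.
  have h2 : bmax * Δt ≤ v - bmax * Δt := by linarith
  have hrest : 0 ≤ Bex (v - bmax * Δt - bmax * Δt) := by
    obtain ⟨n, hn⟩ := exists_nat_gt ((v - bmax * Δt - bmax * Δt) / (bmax * Δt))
    rw [div_lt_iff₀ hc] at hn
    exact Bex_nonneg_of_lt bmax Δt hb ht Bex hBex1 hBex2 n _ (by linarith) (by linarith)
  have hstep := mul_le_mul_of_nonneg_right h2 ht.le
  rw [hBex2 v (by linarith), hBex2 _ h2]
  nlinarith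
end

section
/- Let B be a braking function. Let x ≤ x' be reals, let P, P' be reals, let V, V' ≥ 0 be reals, and let S, S' be finite sets of pairs (q, U) of reals with U ≥ 0. Define l := min(P, x + B(V), min_{(q,U)∈S}(q + B(U))) and l' := min(P', x' + B(V'), min_{(r,W)∈S'}(r + B(W))) (where the minimum over an empty set is omitted). Assume: (a) P ≤ P' or x' + B(V') ≤ P'; (b) V' = V, or there exists (q, U) ∈ S with U = V' and q ≤ x'; (c) every (r, W) ∈ S' either belongs to S or satisfies P ≤ r. Then l ≤ l'; that is, the limit position (and hence the free space) is non-retracting. -/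
/-- The limit position `l = min (P, x + B V, min_{(q,U) ∈ S} (q + B U))`, computed in
`EReal` so that the minimum over an empty set of signs is simply omitted (it is `⊤`). -/
noncomputable def limitPos (B : ℝ → ℝ) (P x V : ℝ) (S : Finset (ℝ × ℝ)) : EReal :=
  min (min (P : EReal) ((x + B V : ℝ) : EReal))
    (S.inf fun p => ((p.1 + B p.2 : ℝ) : EReal))

/-- the limit position (and hence the free space) is non-retracting.
Given a braking function `B`, positions `x ≤ x'`, front lead positions `P, P'`, speed
limits `V, V' ≥ 0` and finite sets of speed-limit signs `S, S'` (pairs `(q, U)` with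
`U ≥ 0`), if (a) `P ≤ P'` or `x' + B V' ≤ P'`; (b) `V' = V` or some `(q, U) ∈ S` has
`U = V'` and `q ≤ x'`; (c) every `(r, W) ∈ S'` belongs to `S` or satisfies `P ≤ r`;
then `l ≤ l'`. -/
theorem limit_position_nonretracting
    (B : ℝ → ℝ) (hB : IsBraking B)
    (x x' P P' V V' : ℝ) (S S' : Finset (ℝ × ℝ))
    (hx : x ≤ x') (hV : 0 ≤ V) (hV' : 0 ≤ V')
    (hS : ∀ p ∈ S, 0 ≤ p.2) (hS' : ∀ p ∈ S', 0 ≤ p.2)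
    (ha : P ≤ P' ∨ x' + B V' ≤ P')
    (hb : V' = V ∨ ∃ p ∈ S, p.2 = V' ∧ p.1 ≤ x')
    (hc : ∀ p ∈ S', p ∈ S ∨ P ≤ p.1) :
    limitPos B P x V S ≤ limitPos B P' x' V' S' := by
  -- Each term of the second minimum dominates some term of the first.
  have hlP : limitPos B P x V S ≤ (P : EReal) :=
    (min_le_left _ _).trans (min_le_left _ _)
  have hlx : limitPos B P x V S ≤ ((x + B V : ℝ) : EReal) :=
    (min_le_left _ _).trans (min_le_right _ _)
  have hlS : ∀ p ∈ S, limitPos B P x V S ≤ ((p.1 + B p.2 : ℝ) : EReal) := fun p hp =>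
    (min_le_right _ _).trans (Finset.inf_le (f := fun p => ((p.1 + B p.2 : ℝ) : EReal)) hp)
  -- If the speed limit changed, the sign in `S` that announced it has been passed.
  have hx' : limitPos B P x V S ≤ ((x' + B V' : ℝ) : EReal) := by
    rcases hb with rfl | ⟨p, hp, rfl, hpx⟩
    · exact hlx.trans (EReal.coe_le_coe_iff.2 (by linarith))
    · exact (hlS p hp).trans (EReal.coe_le_coe_iff.2 (by linarith))
  refine le_min (le_min ?_ hx') (Finset.le_inf fun p hp => ?_)
  · rcases ha with h | h
    · exact hlP.trans (EReal.coe_le_coe_iff.2 h)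
    · exact hx'.trans (EReal.coe_le_coe_iff.2 h)
  · rcases hc p hp with h | h
    · exact hlS p h
    · -- A new sign lies beyond `P`, and its braking distance is nonnegative.
      have := hB.2.1 p.2 (hS' p hp)
      exact hlP.trans (EReal.coe_le_coe_iff.2 (by linarith))
end

section
/- Let B be a braking function and C a speed control function for B. If v ≥ 0 is controllable with respect to VL = ⟨(d_i, V_i)⟩_{i=0,…,n} and (Δv, Δd) := C(v, VL), then v + Δv ≥ 0 and v + Δv is controllable with respect to the updated list update(VL, Δd); that is, B(v + Δv) ≤ max(d_i − Δd, 0) + B(V_i) for every i ∈ {0,…,n} with Δd < d_{i+1}. -/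
/-- if `v ≥ 0` is controllable with respect to `VL` and
`(Δv, Δd) = C v VL`, then `v + Δv ≥ 0` and `v + Δv` is controllable with respect to the
updated list `update (VL, Δd)`; that is, `B (v + Δv) ≤ max (d_i − Δd) 0 + B V_i` for
every `i` with `Δd < d_{i+1}` (with the convention `d_{n+1} = +∞`). -/
theorem controllable_after_step
    (B : ℝ → ℝ) (hB : IsBraking B)
    (C : ℝ → List (ℝ × ℝ) → ℝ × ℝ) (hC : IsSpeedControl B C)
    (v : ℝ) (VL : List (ℝ × ℝ))
    (hv : 0 ≤ v) (hVL : ValidVL VL) (hctrl : Controllable B v VL) :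
    0 ≤ v + (C v VL).1 ∧
    ∀ i : Fin VL.length,
      (∀ h : (i : ℕ) + 1 < VL.length, (C v VL).2 < (VL.get ⟨(i : ℕ) + 1, h⟩).1) →
      B (v + (C v VL).1) ≤ max ((VL.get i).1 - (C v VL).2) 0 + B ((VL.get i).2) := by
  obtain ⟨h0, -, hcur, hahead, -⟩ := hC v VL hv hVL hctrl
  refine ⟨h0, fun i hi => ?_⟩
  rcases le_or_gt (VL.get i).1 (C v VL).2 with hle | hlt
  · -- The constraint is in force at the new position, so its limit bounds the new speed.
    have hmono : B (v + (C v VL).1) ≤ B (VL.get i).2 := by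
      rcases (hcur i hle hi).eq_or_lt with h | h
      · rw [h]
      · exact (hB.2.2 _ _ h h0).le
    linarith [le_max_right ((VL.get i).1 - (C v VL).2) 0]
  · -- The constraint still lies ahead, so the braking-distance condition applies.
    have hbrake := hahead _ (VL.get_mem i) hlt.le
    linarith [le_max_left ((VL.get i).1 - (C v VL).2) 0]
end
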